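/- Let d_1,...,d_n ∈ [0,1), and let P be the n×n partial stochastic matrix with specified diagonal entries p_{jj} = d_j and all off-diagonal entries unspecified. Then the minimum of Kemeny's constant over all stochastic completions of P with a single essential class equals (1/(2 Σ_{j=1}^n 1/(1−d_j))) · ((Σ_{j=1}^n 1/(1−d_j))^2 − Σ_{j=1}^n 1/(1−d_j)^2), and it is attained exactly by the matrices D + (I−D)C where D = diag(d_1,...,d_n) and C is a cyclic permutation matrix of a cycle of length n. -/

import Mathlib

open Finset Matrix

def IsStochastic {n : ℕ} (T : Matrix (Fin n) (Fin n) ℝ) : Prop :=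
  (∀ i j, 0 ≤ T i j) ∧ ∀ i, ∑ j, T i j = 1

def chainStep {n : ℕ} (T : Matrix (Fin n) (Fin n) ℝ) (i j : Fin n) : Prop := 0 < T i j

def reaches {n : ℕ} (T : Matrix (Fin n) (Fin n) ℝ) : Fin n → Fin n → Prop :=
  Relation.ReflTransGen (chainStep T)

def EssentialState {n : ℕ} (T : Matrix (Fin n) (Fin n) ℝ) (i : Fin n) : Prop :=
  ∀ j, reaches T i j → reaches T j i

def SingleEssentialClass {n : ℕ} (T : Matrix (Fin n) (Fin n) ℝ) : Prop :=
  (∃ i, EssentialState T i) ∧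
    ∀ i j, EssentialState T i → EssentialState T j → reaches T i j

noncomputable def kemeny {n : ℕ} (T : Matrix (Fin n) (Fin n) ℝ) : ℝ :=
  ((((Matrix.charpoly (T.map (Complex.ofReal))).roots.erase 1).map
      (fun z => (1 - z)⁻¹)).sum).re

/-! Let `m_i` and `m_ij` be the principal minors of `I - T` obtained by deleting the states `i`,
respectively `i` and `j`. If `p` is the characteristic polynomial of `T`, then Kemeny's constant is
`p''(1) / (2 p'(1))`, and `p'(1) = ∑ m_i`, `p''(1) = ∑_{i ≠ j} m_ij`.

Put `a_j = 1 / (1 - d_j)` and `A = ∑ a_j`. Since `I - T` is an M-matrix, `a_j m_i ≤ m_ij`. The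
symmetry of `m_ij` gives
`A ∑_{i ≠ j} m_ij - (A² - ∑ a_j²) ∑ m_i = ∑_{i ≠ j} (A + a_i - a_j) (m_ij - a_j m_i)`
with positive coefficients `A + a_i - a_j`; dividing by `2 A ∑ m_i` yields the lower bound, with
equality only if `a_j m_i = m_ij` for all `i ≠ j`. In that case all `m_i` are positive, and no cycle
of the transition digraph, loops aside, passes through `j` and avoids `i`: every cycle visits every
state, which forces the digraph to be a single Hamiltonian cycle. Conversely, for such a digraph the
minors are products of diagonal entries and equality holds. -/

section Ground

variable {ι R S : Type*} [DecidableEq ι] [CommRing R] [CommRing S]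

/-- The matrix `M` with the rows indexed by `s` replaced by the corresponding rows of the identity.
Its determinant is the principal minor of `M` on the complement of `s`; keeping the index type fixed
avoids submatrices indexed by subtypes. -/
def ground (M : Matrix ι ι R) (s : Finset ι) : Matrix ι ι R :=
  of fun i j => if i ∈ s then (1 : Matrix ι ι R) i j else M i j

theorem ground_apply_of_mem (M : Matrix ι ι R) {s : Finset ι} {i : ι} (hi : i ∈ s) (j : ι) :
    ground M s i j = (1 : Matrix ι ι R) i j :=
  if_pos hi

theorem ground_apply_of_notMem (M : Matrix ι ι R) {s : Finset ι} {i : ι} (hi : i ∉ s) (j : ι) :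
    ground M s i j = M i j :=
  if_neg hi

theorem ground_empty (M : Matrix ι ι R) : ground M ∅ = M := rfl

theorem ground_insert (M : Matrix ι ι R) (s : Finset ι) (i : ι) :
    ground M (insert i s) = (ground M s).updateRow i (Pi.single i 1) := by
  ext k j
  rcases eq_or_ne k i with rfl | hki
  · rw [ground_apply_of_mem M (mem_insert_self k s), updateRow_self, one_eq_pi_single]
  · simp [ground, hki]

theorem ground_map (f : R →+* S) (M : Matrix ι ι R) (s : Finset ι) :
    (ground M s).map f = ground (M.map f) s := by
  ext i j
  by_cases hi : i ∈ s <;> simp [ground, hi, one_apply, apply_ite f]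

variable [Fintype ι]

theorem adjugate_ground_self (M : Matrix ι ι R) (s : Finset ι) (j : ι) :
    (ground M s).adjugate j j = (ground M (insert j s)).det := by
  rw [adjugate_apply, ground_insert]

end Ground

section CharpolyDerivative

open Polynomial

variable {ι R : Type*} [Fintype ι] [DecidableEq ι] [CommRing R]

theorem derivative_det (M : Matrix ι ι R[X]) :
    derivative M.det = ∑ i, (M.updateRow i fun j => derivative (M i j)).det := by
  simp only [← det_transpose M, ← det_transpose (M.updateRow _ _), det_apply', transpose_apply]
  rw [derivative_sum, sum_comm]
  refine sum_congr rfl fun σ _ => ?_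
  rw [derivative_intCast_mul, derivative_prod_finset, mul_sum]
  refine sum_congr rfl fun i _ => ?_
  rw [← mul_prod_erase _ _ (mem_univ i), updateRow_self, mul_comm (derivative _)]
  congr 2
  exact prod_congr rfl fun k hk => by rw [updateRow_ne (ne_of_mem_erase hk)]

theorem derivative_det_ground_charmatrix (T : Matrix ι ι R) (s : Finset ι) :
    derivative (ground T.charmatrix s).det =
      ∑ i ∈ sᶜ, (ground T.charmatrix (insert i s)).det := by
  rw [derivative_det, ← sum_compl_add_sum s, sum_eq_zero (s := s), add_zero]
  · refine sum_congr rfl fun i hi => ?_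
    rw [ground_insert]
    congr 2
    ext1 j
    rw [ground_apply_of_notMem _ (mem_compl.1 hi)]
    rcases eq_or_ne i j with rfl | hij
    · simp
    · simp [hij, hij.symm]
  · refine fun i hi => det_eq_zero_of_row_eq_zero i fun j => ?_
    rw [updateRow_self, ground_apply_of_mem _ hi, one_apply]
    split_ifs <;> simp

theorem eval_det_ground_charmatrix (T : Matrix ι ι R) (s : Finset ι) (r : R) :
    (ground T.charmatrix s).det.eval r = (ground (scalar ι r - T) s).det := by
  rw [← coe_evalRingHom, RingHom.map_det, RingHom.mapMatrix_apply, ground_map]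
  congr 2
  ext i j
  rcases eq_or_ne i j with rfl | hij
  · simp
  · simp [hij]

theorem eval_derivative_charpoly (T : Matrix ι ι R) (r : R) :
    (derivative T.charpoly).eval r = ∑ i, (ground (scalar ι r - T) {i}).det := by
  rw [charpoly, ← ground_empty T.charmatrix, derivative_det_ground_charmatrix, eval_finsetSum]
  simp only [compl_empty, eval_det_ground_charmatrix, insert_empty_eq]

theorem eval_derivative_derivative_charpoly (T : Matrix ι ι R) (r : R) :
    (derivative (derivative T.charpoly)).eval r =
      ∑ i, ∑ j ∈ univ.erase i, (ground (scalar ι r - T) {i, j}).det := by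
  rw [charpoly, ← ground_empty T.charmatrix, derivative_det_ground_charmatrix, derivative_sum,
    eval_finsetSum, compl_empty]
  refine sum_congr rfl fun i _ => ?_
  simp only [derivative_det_ground_charmatrix, eval_finsetSum, eval_det_ground_charmatrix,
    insert_empty_eq, compl_singleton]
  exact sum_congr rfl fun j _ => by rw [pair_comm]

/-- Write `p = (X - a) q`: then `p'(a) = q(a)` and `p''(a) = 2 q'(a)`, and the sum of inverses
is the logarithmic derivative `q'(a) / q(a)`. -/
theorem sum_roots_erase_mul_derivative {K : Type*} [Field K] [DecidableEq K] {p : K[X]}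
    (hp : p.Splits) {a : K} (ha : p.IsRoot a) (ha' : (derivative p).eval a ≠ 0) :
    ((p.roots.erase a).map fun z => (a - z)⁻¹).sum * (2 * (derivative p).eval a) =
      (derivative (derivative p)).eval a := by
  obtain ⟨q, rfl⟩ := dvd_iff_isRoot.2 ha
  have hq : (derivative ((X - C a) * q)).eval a = q.eval a := by simp
  have hq' : (derivative (derivative ((X - C a) * q))).eval a = 2 * (derivative q).eval a := by
    simp only [derivative_mul, derivative_add, derivative_X_sub_C, one_mul, eval_add, eval_mul,
      eval_sub, eval_X, eval_C, sub_self, zero_mul, add_zero]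
    ring
  rw [hq] at ha'
  have hprod : (X - C a) * q ≠ 0 := mul_ne_zero (X_sub_C_ne_zero a) (by rintro rfl; simp at ha')
  have hlog := (splits_X_sub_C_mul_iff.1 hp).eval_derivative_div_eval_of_ne_zero ha'
  simp only [one_div] at hlog
  rw [roots_mul hprod, roots_X_sub_C, Multiset.singleton_add, Multiset.erase_cons_head, hq, hq',
    ← hlog]
  field_simp

end CharpolyDerivative

section DominantZ

/-- A real Z-matrix (its off-diagonal entries are nonpositive) that is weakly diagonally dominant
with nonnegative diagonal, which for a Z-matrix means that its row sums are nonnegative. -/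
structure IsDominantZ {ι : Type*} [Fintype ι] (M : Matrix ι ι ℝ) : Prop where
  off_diag_nonpos : ∀ i j, i ≠ j → M i j ≤ 0
  row_sum_nonneg : ∀ i, 0 ≤ ∑ j, M i j

/-- A weakly chained diagonally dominant Z-matrix: from every index, a path of negative entries
leads to a row with positive sum. -/
structure IsChainedDominantZ {ι : Type*} [Fintype ι] (M : Matrix ι ι ℝ) : Prop
    extends IsDominantZ M where
  chained : ∀ k, ∃ e, Relation.ReflTransGen (M · · < 0) k e ∧ 0 < ∑ j, M e j

variable {ι : Type*} [Fintype ι] {M : Matrix ι ι ℝ}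

theorem IsDominantZ.diag_nonneg (hM : IsDominantZ M) (i : ι) : 0 ≤ M i i := by
  classical
  have hrow := hM.row_sum_nonneg i
  rw [← add_sum_erase _ _ (mem_univ i)] at hrow
  linarith [sum_nonpos fun j (hj : j ∈ univ.erase i) =>
    hM.off_diag_nonpos i j (ne_of_mem_erase hj).symm]

theorem IsDominantZ.ne_of_neg (hM : IsDominantZ M) {k l : ι} (hkl : M k l < 0) : k ≠ l := by
  rintro rfl
  exact hkl.not_ge (hM.diag_nonneg k)

theorem IsDominantZ.eq_of_mulVec_nonneg_of_isMin (hM : IsDominantZ M) {x : ι → ℝ} {k : ι}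
    (hmin : ∀ l, x k ≤ x l) (hneg : x k < 0) (hk : 0 ≤ (M *ᵥ x) k) :
    ∑ l, M k l = 0 ∧ ∀ l, M k l < 0 → x l = x k := by
  have hsplit : (M *ᵥ x) k = (∑ l, M k l) * x k + ∑ l, M k l * (x l - x k) := by
    simp only [mulVec, dotProduct, mul_sub, sum_sub_distrib, sum_mul, add_sub_cancel]
  have hterm : ∀ l ∈ univ, M k l * (x l - x k) ≤ 0 := fun l _ => by
    rcases eq_or_ne k l with rfl | hkl
    · simp
    · exact mul_nonpos_of_nonpos_of_nonneg (hM.off_diag_nonpos k l hkl) (sub_nonneg.2 (hmin l))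
  have hrow := mul_nonpos_of_nonneg_of_nonpos (hM.row_sum_nonneg k) hneg.le
  have hsum := sum_nonpos hterm
  have hrow0 : (∑ l, M k l) * x k = 0 := by linarith
  have hsum0 : ∑ l, M k l * (x l - x k) = 0 := by linarith
  refine ⟨(mul_eq_zero.1 hrow0).resolve_right hneg.ne, fun l hl => ?_⟩
  have hl0 := (sum_eq_zero_iff_of_nonpos hterm).1 hsum0 l (mem_univ l)
  exact sub_eq_zero.1 ((mul_eq_zero.1 hl0).resolve_left hl.ne)

theorem IsChainedDominantZ.nonneg_of_mulVec_nonneg (hM : IsChainedDominantZ M) {x : ι → ℝ}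
    (hx : ∀ i, 0 ≤ (M *ᵥ x) i) (i : ι) : 0 ≤ x i := by
  have : Nonempty ι := ⟨i⟩
  obtain ⟨k, hk⟩ := Finite.exists_min x
  by_contra! hi
  obtain ⟨e, hke, he⟩ := hM.chained k
  have hmin {l : ι} (hl : x l = x k) := hM.eq_of_mulVec_nonneg_of_isMin
    (fun j => hl ▸ hk j) (hl ▸ (hk i).trans_lt hi) (hx l)
  have hxe : x e = x k := by
    clear he
    induction hke with
    | refl => rfl
    | tail _ hlm ih => exact ((hmin ih).2 _ hlm).trans ih
  exact he.ne' (hmin hxe).1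

theorem IsDominantZ.isChainedDominantZ_smul_add [DecidableEq ι] (hM : IsDominantZ M) {s t : ℝ}
    (hs : 0 ≤ s) (ht : 0 < t) : IsChainedDominantZ (s • M + t • (1 : Matrix ι ι ℝ)) := by
  have hrow (i : ι) : 0 < ∑ j, (s • M + t • (1 : Matrix ι ι ℝ)) i j := by
    have hsum : ∑ j, (s • M + t • (1 : Matrix ι ι ℝ)) i j = s * ∑ j, M i j + t := by
      simp [sum_add_distrib, mul_sum, one_apply]
    rw [hsum]
    exact add_pos_of_nonneg_of_pos (mul_nonneg hs (hM.row_sum_nonneg i)) ht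
  refine ⟨⟨fun i j hij => ?_, fun i => (hrow i).le⟩, fun k => ⟨k, .refl, hrow k⟩⟩
  simpa [one_apply_ne hij] using mul_nonpos_of_nonneg_of_nonpos hs (hM.off_diag_nonpos i j hij)

theorem IsDominantZ.nonneg_of_forall_isChainedDominantZ (hM : IsDominantZ M)
    {f : Matrix ι ι ℝ → ℝ} (hf : Continuous f) (h : ∀ A, IsChainedDominantZ A → 0 ≤ f A) :
    0 ≤ f M := by
  classical
  have hc : Continuous fun ε : ℝ => f ((1 : ℝ) • M + ε • (1 : Matrix ι ι ℝ)) := by fun_prop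
  have ht := (hc.tendsto 0).mono_left (nhdsWithin_le_nhds (s := Set.Ioi 0))
  simp only [one_smul, zero_smul, add_zero] at ht
  refine ge_of_tendsto ht (Filter.eventually_of_mem self_mem_nhdsWithin fun ε hε => ?_)
  simpa only [one_smul] using h _ (hM.isChainedDominantZ_smul_add zero_le_one hε)

variable [DecidableEq ι]

theorem IsChainedDominantZ.det_ne_zero (hM : IsChainedDominantZ M) : M.det ≠ 0 := by
  intro hdet
  obtain ⟨v, hv0, hv⟩ := exists_mulVec_eq_zero_iff.2 hdet
  refine hv0 (funext fun i => le_antisymm ?_ ?_)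
  · exact neg_nonneg.1 (hM.nonneg_of_mulVec_nonneg (x := -v) (by simp [mulVec_neg, hv]) i)
  · exact hM.nonneg_of_mulVec_nonneg (by simp [hv]) i

theorem IsChainedDominantZ.det_pos (hM : IsChainedDominantZ M) : 0 < M.det := by
  by_contra! hneg
  let f : ℝ → ℝ := fun s => (s • M + (1 - s) • (1 : Matrix ι ι ℝ)).det
  have hf : Continuous f := Continuous.matrix_det (by fun_prop)
  obtain ⟨s, ⟨hs0, hs1⟩, hs⟩ := intermediate_value_Icc' zero_le_one hf.continuousOn
    (show (0 : ℝ) ∈ Set.Icc (f 1) (f 0) by simpa [f] using hneg)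
  rcases hs1.eq_or_lt with rfl | hs1
  · exact hM.det_ne_zero (by simpa [f] using hs)
  · exact (hM.isChainedDominantZ_smul_add hs0 (sub_pos.2 hs1)).det_ne_zero hs

theorem IsChainedDominantZ.adjugate_nonneg (hM : IsChainedDominantZ M) (i j : ι) :
    0 ≤ M.adjugate i j := by
  refine hM.nonneg_of_mulVec_nonneg (x := fun k => M.adjugate k j) (fun k => ?_) i
  change 0 ≤ (M * M.adjugate) k j
  rw [mul_adjugate, Matrix.smul_apply, smul_eq_mul]
  exact mul_nonneg hM.det_pos.le (zero_le_one_elem k j)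

theorem IsDominantZ.det_nonneg (hM : IsDominantZ M) : 0 ≤ M.det :=
  hM.nonneg_of_forall_isChainedDominantZ (f := det) (by fun_prop) fun _ hA => hA.det_pos.le

theorem IsDominantZ.adjugate_nonneg (hM : IsDominantZ M) (i j : ι) : 0 ≤ M.adjugate i j :=
  hM.nonneg_of_forall_isChainedDominantZ (f := fun A => A.adjugate i j) (by fun_prop)
    fun _ hA => hA.adjugate_nonneg i j

theorem IsDominantZ.mul_adjugate_nonpos (hM : IsDominantZ M) {k l : ι} (hkl : k ≠ l) (j : ι) :
    M k l * M.adjugate l j ≤ 0 :=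
  mul_nonpos_of_nonpos_of_nonneg (hM.off_diag_nonpos k l hkl) (hM.adjugate_nonneg l j)

theorem IsDominantZ.det_le_mul_adjugate (hM : IsDominantZ M) (j : ι) :
    M.det ≤ M j j * M.adjugate j j := by
  rw [det_eq_sum_mul_adjugate_row M j, ← add_sum_erase _ _ (mem_univ j)]
  exact add_le_of_nonpos_right <| sum_nonpos fun l hl =>
    hM.mul_adjugate_nonpos (ne_of_mem_erase hl).symm j

theorem IsDominantZ.det_lt_mul_adjugate (hM : IsDominantZ M) {j l : ι} (hjl : M j l < 0)
    (hl : 0 < M.adjugate l j) : M.det < M j j * M.adjugate j j := by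
  rw [det_eq_sum_mul_adjugate_row M j, ← add_sum_erase _ _ (mem_univ j)]
  exact add_lt_of_neg_right _ <| sum_neg'
    (fun m hm => hM.mul_adjugate_nonpos (ne_of_mem_erase hm).symm j)
    ⟨l, mem_erase.2 ⟨(hM.ne_of_neg hjl).symm, mem_univ l⟩, mul_neg_of_neg_of_pos hjl hl⟩

theorem IsDominantZ.adjugate_pos_of_neg (hM : IsDominantZ M) {k l j : ι} (hkl : M k l < 0)
    (hl : 0 < M.adjugate l j) : 0 < M.adjugate k j := by
  refine (hM.adjugate_nonneg k j).lt_of_ne fun hk => ?_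
  have hneg : (M * M.adjugate) k j < 0 := by
    rw [mul_apply]
    refine sum_neg' (fun m _ => ?_) ⟨l, mem_univ l, mul_neg_of_neg_of_pos hkl hl⟩
    rcases eq_or_ne k m with rfl | hkm
    · rw [← hk, mul_zero]
    · exact hM.mul_adjugate_nonpos hkm j
  rw [mul_adjugate, Matrix.smul_apply, smul_eq_mul] at hneg
  exact hneg.not_ge (mul_nonneg hM.det_nonneg (zero_le_one_elem k j))

theorem IsDominantZ.det_lt_of_transGen (hM : IsDominantZ M) (hdet : 0 < M.det) {j : ι}
    (hj : Relation.TransGen (M · · < 0) j j) : M.det < M j j * M.adjugate j j := by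
  have hjj : 0 < M.adjugate j j :=
    pos_of_mul_pos_right (hdet.trans_le (hM.det_le_mul_adjugate j)) (hM.diag_nonneg j)
  obtain ⟨l, hjl, hlj⟩ := Relation.TransGen.head'_iff.1 hj
  refine hM.det_lt_mul_adjugate hjl ?_
  clear hjl
  induction hlj using Relation.ReflTransGen.head_induction_on with
  | refl => exact hjj
  | head hab _ ih => exact hM.adjugate_pos_of_neg hab ih

theorem IsDominantZ.isDominantZ_ground (hM : IsDominantZ M) (s : Finset ι) :
    IsDominantZ (ground M s) := by
  refine ⟨fun i j hij => ?_, fun i => ?_⟩ <;> by_cases hi : i ∈ s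
  · rw [ground_apply_of_mem M hi, one_apply_ne hij]
  · exact (ground_apply_of_notMem M hi j).trans_le (hM.off_diag_nonpos i j hij)
  · simp [ground_apply_of_mem M hi, one_apply]
  · simpa only [ground_apply_of_notMem M hi] using hM.row_sum_nonneg i

theorem IsDominantZ.isChainedDominantZ_ground (hM : IsDominantZ M) {e : ι}
    (he : ∀ k, Relation.ReflTransGen (M · · < 0) k e) : IsChainedDominantZ (ground M {e}) := by
  refine ⟨hM.isDominantZ_ground {e}, fun k => ⟨e, ?_, ?_⟩⟩
  · induction he k using Relation.ReflTransGen.head_induction_on with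
    | refl => exact .refl
    | @head k l hkl _ ih =>
      rcases eq_or_ne k e with rfl | hke
      · exact .refl
      · exact ih.head ((ground_apply_of_notMem M (notMem_singleton.2 hke) l).trans_lt hkl)
  · simp [ground_apply_of_mem M (mem_singleton_self e), one_apply]

end DominantZ

section HamiltonianCycle

variable {α : Type*} {r : α → α → Prop}

theorem exists_iterate_eq_of_acyclic [Finite α] {i : α}
    (hr : ∀ j, ¬ Relation.TransGen (fun k l => k ≠ i ∧ r k l) j j) {f : α → α}
    (hf : ∀ k, r k (f k)) (x : α) : ∃ m : ℕ, f^[m] x = i := by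
  let s : α → α → Prop := Function.swap (Relation.TransGen fun k l => k ≠ i ∧ r k l)
  have : IsTrans α s := ⟨fun _ _ _ h h' => h'.trans h⟩
  have : Std.Irrefl s := ⟨hr⟩
  induction x using (Finite.wellFounded_of_trans_of_irrefl s).induction with
  | _ x ih =>
    rcases eq_or_ne x i with rfl | hx
    · exact ⟨0, rfl⟩
    · obtain ⟨m, hm⟩ := ih (f x) (.single ⟨hx, hf x⟩)
      exact ⟨m + 1, hm⟩

theorem surjective_selector_of_acyclic [Finite α]
    (hr : ∀ i j, ¬ Relation.TransGen (fun k l => k ≠ i ∧ r k l) j j) {f : α → α}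
    (hf : ∀ k, r k (f k)) : f.Surjective := fun i => by
  obtain ⟨m, hm⟩ := exists_iterate_eq_of_acyclic (hr i) hf (f i)
  exact ⟨f^[m] i, by rw [← Function.iterate_succ_apply' f, Function.iterate_succ_apply, hm]⟩

/-- Redirecting `f` at `k` to `l` gives another selector of `r`, which misses the value `f k`
unless it is `l`. -/
theorem eq_selector_of_acyclic [Finite α]
    (hr : ∀ i j, ¬ Relation.TransGen (fun k l => k ≠ i ∧ r k l) j j) {f : α → α}
    (hf : ∀ k, r k (f k)) {k l : α} (hkl : r k l) : l = f k := by
  classical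
  have hg (y : α) : r y (Function.update f k l y) := by
    rcases eq_or_ne y k with rfl | hy <;> simp [*]
  obtain ⟨y, hy⟩ := surjective_selector_of_acyclic hr hg (f k)
  rcases eq_or_ne y k with rfl | hyk
  · rwa [Function.update_self] at hy
  · rw [Function.update_of_ne hyk] at hy
    exact absurd (Finite.injective_iff_surjective.2 (surjective_selector_of_acyclic hr hf) hy) hyk

variable [Fintype α] [DecidableEq α]

theorem exists_isCycle_of_acyclic [Nonempty α] (hirrefl : ∀ k, ¬ r k k) (hserial : ∀ k, ∃ l, r k l)
    (hr : ∀ i j, ¬ Relation.TransGen (fun k l => k ≠ i ∧ r k l) j j) :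
    ∃ σ : Equiv.Perm α, σ.IsCycle ∧ σ.support = univ ∧ ∀ k l, r k l → l = σ k := by
  choose f hf using hserial
  have hne (k : α) : f k ≠ k := fun h => hirrefl k (by simpa only [h] using hf k)
  let σ := Equiv.ofBijective f
    (Finite.surjective_iff_bijective.1 (surjective_selector_of_acyclic hr hf))
  obtain ⟨x⟩ := ‹Nonempty α›
  refine ⟨σ, ⟨x, hne x, fun y _ => ?_⟩, ?_, fun k l => eq_selector_of_acyclic hr hf⟩
  · obtain ⟨m, hm⟩ := exists_iterate_eq_of_acyclic (hr y) hf x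
    exact ⟨m, by rwa [zpow_natCast, Equiv.Perm.coe_pow]⟩
  · exact eq_univ_of_forall fun k => Equiv.Perm.mem_support.2 (hne k)

variable {σ : Equiv.Perm α}

theorem exists_pow_apply_eq_of_support_eq_univ (hσ : σ.IsCycle) (hsupp : σ.support = univ)
    (x y : α) : ∃ m : ℕ, (σ ^ m) x = y :=
  hσ.exists_pow_eq (Equiv.Perm.mem_support.1 (hsupp ▸ mem_univ x))
    (Equiv.Perm.mem_support.1 (hsupp ▸ mem_univ y))

/-- A permutation that sends each `k` to `k` or `σ k` and moves some point moves the whole cycle of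
that point, so the only terms of the determinant are those of `1` and of `σ`. -/
theorem det_eq_prod_diag_of_isCycle {R : Type*} [CommRing R] {M : Matrix α α R} (hσ : σ.IsCycle)
    (hsupp : σ.support = univ) (hM : ∀ k l, l ≠ k → l ≠ σ k → M k l = 0) {i : α}
    (hi : M i (σ i) = 0) : M.det = ∏ k, M k k := by
  rw [← det_transpose, det_apply', Fintype.sum_eq_single 1]
  · simp
  intro π hπ
  suffices ∃ k, M k (π k) = 0 by
    obtain ⟨k, hk⟩ := this
    rw [prod_eq_zero (mem_univ k) (by rwa [transpose_apply]), mul_zero]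
  by_contra! h
  have hπσ (k : α) (hk : π k ≠ k) : π k = σ k := by
    by_contra hk'
    exact h k (hM k _ hk hk')
  have hstep (k : α) (hk : π k ≠ k) : π (σ k) ≠ σ k := fun hfix =>
    hk (π.injective (by rwa [← hπσ k hk] at hfix))
  obtain ⟨k, hk⟩ : ∃ k, π k ≠ k := by
    by_contra! hall
    exact hπ (Equiv.ext hall)
  have hmoves (m : ℕ) : π ((σ ^ m) k) ≠ (σ ^ m) k := by
    induction m with
    | zero => exact hk
    | succ m ih => simpa only [pow_succ', Equiv.Perm.mul_apply] using hstep _ ih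
  obtain ⟨m, rfl⟩ := exists_pow_apply_eq_of_support_eq_univ hσ hsupp k i
  exact h _ (hπσ _ (hmoves m) ▸ hi)

theorem det_ground_of_isCycle {R : Type*} [CommRing R] {M : Matrix α α R} (hσ : σ.IsCycle)
    (hsupp : σ.support = univ) (hM : ∀ k l, l ≠ k → l ≠ σ k → M k l = 0) {s : Finset α}
    (hs : s.Nonempty) : (ground M s).det = ∏ k ∈ sᶜ, M k k := by
  obtain ⟨i, hi⟩ := hs
  have hne : σ i ≠ i := Equiv.Perm.mem_support.1 (hsupp ▸ mem_univ i)
  have hground (k l : α) (hlk : l ≠ k) (hl : l ≠ σ k) : ground M s k l = 0 := by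
    by_cases hk : k ∈ s
    · rw [ground_apply_of_mem M hk, one_apply_ne hlk.symm]
    · rw [ground_apply_of_notMem M hk, hM k l hlk hl]
  rw [det_eq_prod_diag_of_isCycle hσ hsupp hground (i := i)
    (by rw [ground_apply_of_mem M hi, one_apply_ne hne.symm]), ← prod_mul_prod_compl s]
  rw [prod_eq_one fun k hk => by rw [ground_apply_of_mem M hk, one_apply_eq], one_mul]
  exact prod_congr rfl fun k hk => ground_apply_of_notMem M (mem_compl.1 hk) k

end HamiltonianCycle

/-- Symmetry of `p` cancels the terms `(a i - a j) * p i j`, and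
`∑ j ≠ i, (A + a i - a j) * a j = A ^ 2 - ∑ j, a j ^ 2` for every `i`, where `A = ∑ j, a j`. -/
theorem sum_add_sub_mul_sub {ι R : Type*} [Fintype ι] [DecidableEq ι] [CommRing R] (a m : ι → R)
    {p : ι → ι → R} (hp : ∀ i j, p i j = p j i) :
    ∑ i, ∑ j ∈ univ.erase i, (∑ k, a k + a i - a j) * (p i j - a j * m i) =
      (∑ k, a k) * ∑ i, ∑ j ∈ univ.erase i, p i j -
        ((∑ k, a k) ^ 2 - ∑ k, a k ^ 2) * ∑ i, m i := by
  have hcancel : ∑ i, ∑ j ∈ univ.erase i, (a i - a j) * p i j = 0 := by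
    have herase (i : ι) : ∑ j ∈ univ.erase i, (a i - a j) * p i j = ∑ j, (a i - a j) * p i j :=
      sum_erase _ (by rw [sub_self, zero_mul])
    simp only [herase]
    simp only [sub_mul, sum_sub_distrib]
    rw [sub_eq_zero, sum_comm]
    exact sum_congr rfl fun i _ => sum_congr rfl fun j _ => by rw [hp]
  have hweights (i : ι) : ∑ j ∈ univ.erase i, (∑ k, a k + a i - a j) * a j =
      (∑ k, a k) ^ 2 - ∑ k, a k ^ 2 := by
    simp only [sub_mul, sum_sub_distrib, ← mul_sum, sum_erase_eq_sub (mem_univ i), ← sq]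
    ring
  have hterm (i j : ι) : (∑ k, a k + a i - a j) * (p i j - a j * m i) =
      (∑ k, a k) * p i j + (a i - a j) * p i j - (∑ k, a k + a i - a j) * a j * m i := by ring
  simp only [hterm, sum_sub_distrib, sum_add_distrib, hcancel, add_zero, ← sum_mul, hweights,
    ← mul_sum]

section Reachability

theorem exists_reflTransGen_recurrent {α : Type*} [Finite α] (r : α → α → Prop) (k : α) :
    ∃ e, Relation.ReflTransGen r k e ∧
      ∀ j, Relation.ReflTransGen r e j → Relation.ReflTransGen r j e := by
  let : Preorder α :=
    { le := Relation.ReflTransGen r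
      le_refl := fun _ => .refl
      le_trans := fun _ _ _ => Relation.ReflTransGen.trans }
  obtain ⟨e, hke, he⟩ := Set.univ.toFinite.exists_le_maximal (Set.mem_univ k)
  exact ⟨e, hke, fun j hej => he.2 (Set.mem_univ j) hej⟩

variable {n : ℕ} {T : Matrix (Fin n) (Fin n) ℝ}

theorem SingleEssentialClass.exists_forall_reaches (hS : SingleEssentialClass T) :
    ∃ e, ∀ k, reaches T k e := by
  obtain ⟨⟨e, he⟩, hclass⟩ := hS
  refine ⟨e, fun k => ?_⟩
  obtain ⟨e', hke', he'⟩ := exists_reflTransGen_recurrent (chainStep T) k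
  exact hke'.trans (hclass e' e he' he)

theorem singleEssentialClass_of_isCycle {σ : Equiv.Perm (Fin n)} (hσ : σ.IsCycle)
    (hsupp : σ.support = univ) (hT : ∀ k, 0 < T k (σ k)) : SingleEssentialClass T := by
  have hreach (x y : Fin n) : reaches T x y := by
    obtain ⟨m, rfl⟩ := exists_pow_apply_eq_of_support_eq_univ hσ hsupp x y
    induction m with
    | zero => exact .refl
    | succ m ih =>
      rw [pow_succ', Equiv.Perm.mul_apply]
      exact ih.tail (hT _)
  obtain ⟨x, -⟩ := hσ
  exact ⟨⟨x, fun _ _ => hreach _ _⟩, fun i j _ _ => hreach i j⟩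

theorem one_sub_apply_neg_iff {k l : Fin n} (hkl : k ≠ l) : (1 - T) k l < 0 ↔ 0 < T k l := by
  rw [Matrix.sub_apply, one_apply_ne hkl, zero_sub, neg_lt_zero]

theorem reflTransGen_one_sub_of_reaches {k e : Fin n} (h : reaches T k e) :
    Relation.ReflTransGen ((1 - T) · · < 0) k e := by
  induction h with
  | refl => exact .refl
  | @tail l m _ hlm ih =>
    rcases eq_or_ne l m with rfl | hne
    · exact ih
    · exact ih.tail ((one_sub_apply_neg_iff hne).2 hlm)

end Reachability

section Kemeny

variable {n : ℕ} {T : Matrix (Fin n) (Fin n) ℝ}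

/-- The principal minor of `1 - T` on the complement of the state `i`; by the matrix tree theorem
it is the total weight of the spanning trees of the transition digraph directed towards `i`. -/
noncomputable def rootMinor (T : Matrix (Fin n) (Fin n) ℝ) (i : Fin n) : ℝ :=
  (ground (1 - T) {i}).det

/-- The principal minor of `1 - T` on the complement of the states `i` and `j`. -/
noncomputable def pairMinor (T : Matrix (Fin n) (Fin n) ℝ) (i j : Fin n) : ℝ :=
  (ground (1 - T) {i, j}).det

/-- The mean length of a stay in state `j` when `d` is the diagonal of the transition matrix
(the junk value `0` if `d j = 1`). -/
noncomputable def sojourn (d : Fin n → ℝ) (j : Fin n) : ℝ :=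
  (1 - d j)⁻¹

/-- The minimum of Kemeny's constant over the completions with diagonal `d`. -/
noncomputable def minKemeny (d : Fin n → ℝ) : ℝ :=
  (1 / (2 * ∑ j, sojourn d j)) * ((∑ j, sojourn d j) ^ 2 - ∑ j, sojourn d j ^ 2)

theorem pairMinor_comm (T : Matrix (Fin n) (Fin n) ℝ) (i j : Fin n) :
    pairMinor T i j = pairMinor T j i := by
  rw [pairMinor, pairMinor, pair_comm]

theorem sojourn_pos {d : Fin n → ℝ} {j : Fin n} (hj : d j < 1) : 0 < sojourn d j :=
  inv_pos.2 (sub_pos.2 hj)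

theorem IsStochastic.isRoot_charpoly_one [Nonempty (Fin n)] (hT : IsStochastic T) :
    T.charpoly.IsRoot 1 := by
  rw [Polynomial.IsRoot, eval_charpoly, map_one, ← exists_mulVec_eq_zero_iff]
  refine ⟨1, one_ne_zero, funext fun i => ?_⟩
  simp [mulVec, dotProduct, one_apply, hT.2 i]

open Polynomial in
theorem kemeny_eq_div (hT : T.charpoly.IsRoot 1) (hm : ∑ i, rootMinor T i ≠ 0) :
    kemeny T = (∑ i, ∑ j ∈ univ.erase i, pairMinor T i j) / (2 * ∑ i, rootMinor T i) := by
  have hmap : (T.map Complex.ofReal).charpoly = T.charpoly.map Complex.ofRealHom :=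
    charpoly_map T Complex.ofRealHom
  have heval (p : ℝ[X]) : (p.map Complex.ofRealHom).eval 1 = ((p.eval 1 : ℝ) : ℂ) := by simp
  have hp' : (derivative T.charpoly).eval 1 = ∑ i, rootMinor T i := by
    simp only [eval_derivative_charpoly, map_one, rootMinor]
  have hp'' : (derivative (derivative T.charpoly)).eval 1 =
      ∑ i, ∑ j ∈ univ.erase i, pairMinor T i j := by
    simp only [eval_derivative_derivative_charpoly, map_one, pairMinor]
  have hsum := sum_roots_erase_mul_derivative
    (IsAlgClosed.splits (T.charpoly.map Complex.ofRealHom)) (a := 1)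
    (by rw [IsRoot, heval, hT, Complex.ofReal_zero])
    (by rwa [derivative_map, heval, hp', Complex.ofReal_ne_zero])
  rw [derivative_map, derivative_map, heval, heval, hp', hp'', ← Complex.ofReal_ofNat,
    ← Complex.ofReal_mul] at hsum
  rw [kemeny, hmap,
    eq_div_of_mul_eq (Complex.ofReal_ne_zero.2 (mul_ne_zero two_ne_zero hm)) hsum,
    ← Complex.ofReal_div, Complex.ofReal_re]

theorem IsStochastic.isDominantZ_one_sub (hT : IsStochastic T) : IsDominantZ (1 - T) where
  off_diag_nonpos i j hij := by simpa [one_apply_ne hij] using hT.1 i j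
  row_sum_nonneg i := by simp [one_apply, hT.2 i]

theorem IsStochastic.rootMinor_nonneg (hT : IsStochastic T) (i : Fin n) : 0 ≤ rootMinor T i :=
  (hT.isDominantZ_one_sub.isDominantZ_ground {i}).det_nonneg

theorem IsStochastic.exists_rootMinor_pos (hT : IsStochastic T) (hS : SingleEssentialClass T) :
    ∃ e, 0 < rootMinor T e := by
  obtain ⟨e, he⟩ := hS.exists_forall_reaches
  exact ⟨e, (hT.isDominantZ_one_sub.isChainedDominantZ_ground fun k =>
    reflTransGen_one_sub_of_reaches (he k)).det_pos⟩

theorem IsStochastic.sum_rootMinor_pos (hT : IsStochastic T) (hS : SingleEssentialClass T) :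
    0 < ∑ i, rootMinor T i := by
  obtain ⟨e, he⟩ := hT.exists_rootMinor_pos hS
  exact sum_pos' (fun i _ => hT.rootMinor_nonneg i) ⟨e, mem_univ e, he⟩

theorem ground_one_sub_mul_adjugate {i j : Fin n} (hji : j ≠ i) :
    ground (1 - T) {i} j j * (ground (1 - T) {i}).adjugate j j =
      (1 - T j j) * pairMinor T i j := by
  rw [adjugate_ground_self, ground_apply_of_notMem _ (notMem_singleton.2 hji), Matrix.sub_apply,
    one_apply_eq, pairMinor, pair_comm]

theorem IsStochastic.sojourn_mul_rootMinor_le (hT : IsStochastic T) {i j : Fin n} (hji : j ≠ i)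
    (hj : T j j < 1) : sojourn T.diag j * rootMinor T i ≤ pairMinor T i j := by
  rw [sojourn, diag_apply, inv_mul_le_iff₀ (sub_pos.2 hj), ← ground_one_sub_mul_adjugate hji]
  exact (hT.isDominantZ_one_sub.isDominantZ_ground {i}).det_le_mul_adjugate j

theorem IsStochastic.sojourn_mul_rootMinor_lt (hT : IsStochastic T) {i j : Fin n} (hji : j ≠ i)
    (hj : T j j < 1) (hi : 0 < rootMinor T i)
    (hjj : Relation.TransGen (fun k l => k ≠ i ∧ l ≠ k ∧ 0 < T k l) j j) :
    sojourn T.diag j * rootMinor T i < pairMinor T i j := by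
  rw [sojourn, diag_apply, inv_mul_lt_iff₀ (sub_pos.2 hj), ← ground_one_sub_mul_adjugate hji]
  refine (hT.isDominantZ_one_sub.isDominantZ_ground {i}).det_lt_of_transGen hi
    (Relation.TransGen.mono ?_ _ _ hjj)
  rintro k l ⟨hki, hlk, hkl⟩
  rw [ground_apply_of_notMem _ (notMem_singleton.2 hki)]
  exact (one_sub_apply_neg_iff hlk.symm).2 hkl

theorem IsStochastic.kemeny_sub_minKemeny (hT : IsStochastic T) (hdiag : ∀ i, T i i < 1)
    (hS : SingleEssentialClass T) :
    kemeny T - minKemeny T.diag =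
      (∑ i, ∑ j ∈ univ.erase i, (∑ k, sojourn T.diag k + sojourn T.diag i - sojourn T.diag j) *
        (pairMinor T i j - sojourn T.diag j * rootMinor T i)) /
        (2 * (∑ k, sojourn T.diag k) * ∑ i, rootMinor T i) := by
  have hm := (hT.sum_rootMinor_pos hS).ne'
  obtain ⟨⟨e, -⟩, -⟩ := hS
  have : Nonempty (Fin n) := ⟨e⟩
  have hA : ∑ k, sojourn T.diag k ≠ 0 :=
    (sum_pos (fun k _ => sojourn_pos (hdiag k)) univ_nonempty).ne'
  rw [kemeny_eq_div hT.isRoot_charpoly_one hm, minKemeny,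
    sum_add_sub_mul_sub _ _ (pairMinor_comm T)]
  field_simp

theorem sum_sojourn_add_sub_pos {d : Fin n → ℝ} (hd : ∀ j, d j < 1) (i j : Fin n) :
    0 < ∑ k, sojourn d k + sojourn d i - sojourn d j := by
  have hj := single_le_sum (fun k _ => (sojourn_pos (hd k)).le) (mem_univ j)
  linarith [sojourn_pos (hd i)]

theorem IsStochastic.gap_term_nonneg (hT : IsStochastic T) (hdiag : ∀ i, T i i < 1) (i : Fin n) :
    ∀ j ∈ univ.erase i, 0 ≤ (∑ k, sojourn T.diag k + sojourn T.diag i - sojourn T.diag j) *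
      (pairMinor T i j - sojourn T.diag j * rootMinor T i) := fun j hj =>
  mul_nonneg (sum_sojourn_add_sub_pos hdiag i j).le
    (sub_nonneg.2 (hT.sojourn_mul_rootMinor_le (ne_of_mem_erase hj) (hdiag j)))

theorem IsStochastic.minKemeny_le_kemeny (hT : IsStochastic T) (hdiag : ∀ i, T i i < 1)
    (hS : SingleEssentialClass T) : minKemeny T.diag ≤ kemeny T := by
  rw [← sub_nonneg, hT.kemeny_sub_minKemeny hdiag hS]
  exact div_nonneg (sum_nonneg fun i _ => sum_nonneg (hT.gap_term_nonneg hdiag i))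
    (mul_nonneg (mul_nonneg zero_le_two (sum_nonneg fun k _ => (sojourn_pos (hdiag k)).le))
      (hT.sum_rootMinor_pos hS).le)

theorem IsStochastic.kemeny_eq_minKemeny_iff (hT : IsStochastic T) (hdiag : ∀ i, T i i < 1)
    (hS : SingleEssentialClass T) :
    kemeny T = minKemeny T.diag ↔
      ∀ i j, j ≠ i → sojourn T.diag j * rootMinor T i = pairMinor T i j := by
  obtain ⟨⟨e, -⟩, -⟩ := id hS
  have hA := sum_pos (fun k _ => sojourn_pos (d := T.diag) (hdiag k)) ⟨e, mem_univ e⟩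
  have hden := mul_pos (mul_pos two_pos hA) (hT.sum_rootMinor_pos hS)
  rw [← sub_eq_zero, hT.kemeny_sub_minKemeny hdiag hS, div_eq_zero_iff, or_iff_left hden.ne',
    sum_eq_zero_iff_of_nonneg fun i _ => sum_nonneg (hT.gap_term_nonneg hdiag i)]
  refine ⟨fun h i j hji => ?_, fun h i _ => sum_eq_zero fun j hj => ?_⟩
  · have hij := (sum_eq_zero_iff_of_nonneg (hT.gap_term_nonneg hdiag i)).1 (h i (mem_univ i)) j
      (mem_erase.2 ⟨hji, mem_univ j⟩)
    exact (sub_eq_zero.1 ((mul_eq_zero.1 hij).resolve_left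
      (sum_sojourn_add_sub_pos hdiag i j).ne')).symm
  · rw [h i j (ne_of_mem_erase hj), sub_self, mul_zero]

end Kemeny

section CycleCompletion

variable {n : ℕ} {T : Matrix (Fin n) (Fin n) ℝ} {d : Fin n → ℝ} {σ : Equiv.Perm (Fin n)}

/-- The matrix `D + (I - D) C`, where `D` is the diagonal matrix of `d` and `C` is the permutation
matrix of `σ`. -/
noncomputable def cycleCompletion (d : Fin n → ℝ) (σ : Equiv.Perm (Fin n)) :
    Matrix (Fin n) (Fin n) ℝ :=
  diagonal d + (1 - diagonal d) * of fun i j => if j = σ i then (1 : ℝ) else 0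

theorem cycleCompletion_apply (d : Fin n → ℝ) (σ : Equiv.Perm (Fin n)) (k l : Fin n) :
    cycleCompletion d σ k l = (if k = l then d k else 0) + if l = σ k then 1 - d k else 0 := by
  rw [cycleCompletion, Matrix.add_apply, diagonal_apply, ← diagonal_one, diagonal_sub, diagonal_mul]
  simp

theorem cycleCompletion_apply_self {k : Fin n} (hk : σ k ≠ k) : cycleCompletion d σ k k = d k := by
  rw [cycleCompletion_apply, if_pos rfl, if_neg hk.symm, add_zero]

theorem cycleCompletion_apply_perm {k : Fin n} (hk : σ k ≠ k) :
    cycleCompletion d σ k (σ k) = 1 - d k := by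
  rw [cycleCompletion_apply, if_neg hk.symm, if_pos rfl, zero_add]

theorem cycleCompletion_apply_of_ne {k l : Fin n} (hlk : l ≠ k) (hl : l ≠ σ k) :
    cycleCompletion d σ k l = 0 := by
  rw [cycleCompletion_apply, if_neg hlk.symm, if_neg hl, zero_add]

theorem isStochastic_cycleCompletion (hd : ∀ j, 0 ≤ d j ∧ d j ≤ 1) (σ : Equiv.Perm (Fin n)) :
    IsStochastic (cycleCompletion d σ) := by
  refine ⟨fun k l => ?_, fun k => ?_⟩
  · rw [cycleCompletion_apply]
    exact add_nonneg (ite_nonneg (hd k).1 le_rfl) (ite_nonneg (sub_nonneg.2 (hd k).2) le_rfl)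
  · simp only [cycleCompletion_apply, sum_add_distrib, sum_ite_eq, sum_ite_eq', mem_univ, if_true,
      add_sub_cancel]

theorem IsStochastic.eq_cycleCompletion (hT : IsStochastic T) (hσ : ∀ k, σ k ≠ k)
    (hzero : ∀ k l, l ≠ k → l ≠ σ k → T k l = 0) : T = cycleCompletion T.diag σ := by
  ext k l
  rcases eq_or_ne l k with rfl | hlk
  · rw [cycleCompletion_apply_self (hσ l), diag_apply]
  rcases eq_or_ne l (σ k) with rfl | hl
  · have hsum := hT.2 k
    rw [Fintype.sum_eq_add k (σ k) (hσ k).symm fun l hl => hzero k l hl.1 hl.2] at hsum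
    rw [cycleCompletion_apply_perm (hσ k), diag_apply]
    linarith
  · rw [cycleCompletion_apply_of_ne hlk hl, hzero k l hlk hl]

theorem IsStochastic.exists_ne_pos (hT : IsStochastic T) {k : Fin n} (hk : T k k < 1) :
    ∃ l, l ≠ k ∧ 0 < T k l := by
  by_contra! h
  have hsum := hT.2 k
  rw [← add_sum_erase _ _ (mem_univ k)] at hsum
  linarith [sum_nonpos fun l (hl : l ∈ univ.erase k) => h l (ne_of_mem_erase hl)]

theorem IsStochastic.exists_eq_cycleCompletion [Nonempty (Fin n)] (hT : IsStochastic T)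
    (hdiag : ∀ i, T i i < 1) (hpos : ∀ i, 0 < rootMinor T i)
    (heq : ∀ i j, j ≠ i → sojourn T.diag j * rootMinor T i = pairMinor T i j) :
    ∃ σ : Equiv.Perm (Fin n), σ.IsCycle ∧ σ.support = univ ∧ T = cycleCompletion T.diag σ := by
  have hacyclic (i j : Fin n) :
      ¬ Relation.TransGen (fun k l => k ≠ i ∧ l ≠ k ∧ 0 < T k l) j j := fun hjj => by
    obtain ⟨_, ⟨hji, -⟩, -⟩ := Relation.TransGen.head'_iff.1 hjj
    exact (hT.sojourn_mul_rootMinor_lt hji (hdiag j) (hpos i) hjj).ne (heq i j hji)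
  obtain ⟨σ, hσ, hsupp, hedge⟩ := exists_isCycle_of_acyclic (fun k h => h.1 rfl)
    (fun k => hT.exists_ne_pos (hdiag k)) hacyclic
  refine ⟨σ, hσ, hsupp, hT.eq_cycleCompletion
    (fun k => Equiv.Perm.mem_support.1 (hsupp ▸ mem_univ k)) fun k l hlk hl => ?_⟩
  by_contra hkl
  exact hl (hedge k l ⟨hlk, (hT.1 k l).lt_of_ne' hkl⟩)

theorem IsStochastic.rootMinor_pos_of_sojourn_mul_eq (hT : IsStochastic T)
    (hdiag : ∀ i, T i i < 1) (hS : SingleEssentialClass T)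
    (heq : ∀ i j, j ≠ i → sojourn T.diag j * rootMinor T i = pairMinor T i j) (i : Fin n) :
    0 < rootMinor T i := by
  obtain ⟨e, he⟩ := hT.exists_rootMinor_pos hS
  rcases eq_or_ne i e with rfl | hie
  · exact he
  have hbalance : sojourn T.diag e * rootMinor T i = sojourn T.diag i * rootMinor T e := by
    rw [heq i e hie.symm, heq e i hie, pairMinor_comm]
  exact pos_of_mul_pos_right (hbalance ▸ mul_pos (sojourn_pos (hdiag i)) he)
    (sojourn_pos (hdiag e)).le

theorem sojourn_mul_rootMinor_of_isCycle (hσ : σ.IsCycle) (hsupp : σ.support = univ)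
    (hT : ∀ k l, l ≠ k → l ≠ σ k → T k l = 0) {i j : Fin n} (hji : j ≠ i) (hj : T j j ≠ 1) :
    sojourn T.diag j * rootMinor T i = pairMinor T i j := by
  have hlap (k l : Fin n) (hlk : l ≠ k) (hl : l ≠ σ k) : (1 - T) k l = 0 := by
    rw [Matrix.sub_apply, one_apply_ne hlk.symm, hT k l hlk hl, sub_zero]
  have hjj : (1 - T) j j = 1 - T j j := by rw [Matrix.sub_apply, one_apply_eq]
  rw [rootMinor, pairMinor_comm, pairMinor,
    det_ground_of_isCycle hσ hsupp hlap (singleton_nonempty i),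
    det_ground_of_isCycle hσ hsupp hlap (insert_nonempty j {i}), compl_insert,
    ← mul_prod_erase _ _ (mem_compl.2 (notMem_singleton.2 hji)), hjj]
  exact inv_mul_cancel_left₀ (sub_ne_zero.2 hj.symm) _

theorem IsStochastic.kemeny_eq_minKemeny_iff_exists_isCycle (hT : IsStochastic T)
    (hdiag : ∀ i, T i i < 1) (hS : SingleEssentialClass T) :
    kemeny T = minKemeny T.diag ↔
      ∃ σ : Equiv.Perm (Fin n), σ.IsCycle ∧ σ.support = univ ∧ T = cycleCompletion T.diag σ := by
  rw [hT.kemeny_eq_minKemeny_iff hdiag hS]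
  refine ⟨fun heq => ?_, fun ⟨σ, hσ, hsupp, hTσ⟩ i j hji => ?_⟩
  · obtain ⟨⟨e, -⟩, -⟩ := id hS
    have : Nonempty (Fin n) := ⟨e⟩
    exact hT.exists_eq_cycleCompletion hdiag (hT.rootMinor_pos_of_sojourn_mul_eq hdiag hS heq) heq
  · refine sojourn_mul_rootMinor_of_isCycle hσ hsupp (fun k l hlk hl => ?_) hji (hdiag j).ne
    rw [hTσ]
    exact cycleCompletion_apply_of_ne hlk hl

theorem exists_kemeny_eq_minKemeny (hn : 2 ≤ n) (hd : ∀ j, 0 ≤ d j ∧ d j < 1) :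
    ∃ T : Matrix (Fin n) (Fin n) ℝ, IsStochastic T ∧ T.diag = d ∧ SingleEssentialClass T ∧
      kemeny T = minKemeny d := by
  have hσ := isCycle_finRotate_of_le hn
  have hsupp := support_finRotate_of_le hn
  have hne (k : Fin n) : finRotate n k ≠ k := Equiv.Perm.mem_support.1 (hsupp ▸ mem_univ k)
  have hT := isStochastic_cycleCompletion (fun j => ⟨(hd j).1, (hd j).2.le⟩) (finRotate n)
  have hself (k : Fin n) : cycleCompletion d (finRotate n) k k = d k :=
    cycleCompletion_apply_self (hne k)
  have hTd : (cycleCompletion d (finRotate n)).diag = d := funext hself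
  have hS := singleEssentialClass_of_isCycle hσ hsupp (T := cycleCompletion d (finRotate n))
    fun k => by
      rw [cycleCompletion_apply_perm (hne k)]
      exact sub_pos.2 (hd k).2
  have hmin := (hT.kemeny_eq_minKemeny_iff_exists_isCycle (fun k => by
    rw [hself]; exact (hd k).2) hS).2 ⟨finRotate n, hσ, hsupp, by rw [hTd]⟩
  exact ⟨_, hT, hTd, hS, by rwa [hTd] at hmin⟩

end CycleCompletion

/-- Minimizing Kemeny's constant over stochastic completions of a partial
stochastic matrix with specified diagonal `d`: the minimum value is the stated
expression, it is attained, and it is attained exactly at the matrices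
`D + (I-D)C` with `C` the permutation matrix of an `n`-cycle. -/
theorem diag_completion_min_kemeny
    (n : ℕ) (hn : 2 ≤ n) (d : Fin n → ℝ) (hd : ∀ j, 0 ≤ d j ∧ d j < 1) :
    (∀ T : Matrix (Fin n) (Fin n) ℝ, IsStochastic T → (∀ j, T j j = d j) →
      SingleEssentialClass T →
      (1 / (2 * ∑ j, (1 - d j)⁻¹)) *
          ((∑ j, (1 - d j)⁻¹) ^ 2 - ∑ j, ((1 - d j)⁻¹) ^ 2) ≤ kemeny T) ∧
    (∃ T : Matrix (Fin n) (Fin n) ℝ, IsStochastic T ∧ (∀ j, T j j = d j) ∧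
      SingleEssentialClass T ∧
      kemeny T = (1 / (2 * ∑ j, (1 - d j)⁻¹)) *
          ((∑ j, (1 - d j)⁻¹) ^ 2 - ∑ j, ((1 - d j)⁻¹) ^ 2)) ∧
    (∀ T : Matrix (Fin n) (Fin n) ℝ, IsStochastic T → (∀ j, T j j = d j) →
      SingleEssentialClass T →
      (kemeny T = (1 / (2 * ∑ j, (1 - d j)⁻¹)) *
          ((∑ j, (1 - d j)⁻¹) ^ 2 - ∑ j, ((1 - d j)⁻¹) ^ 2) ↔
        ∃ σ : Equiv.Perm (Fin n), σ.IsCycle ∧ σ.support = Finset.univ ∧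
          T = Matrix.diagonal d + (1 - Matrix.diagonal d) *
            Matrix.of (fun i j => if j = σ i then (1 : ℝ) else 0))) := by
  refine ⟨fun T hT hTd hS => ?_, ?_, fun T hT hTd hS => ?_⟩
  · obtain rfl : T.diag = d := funext hTd
    exact hT.minKemeny_le_kemeny (fun i => (hd i).2) hS
  · obtain ⟨T, hT, hTd, hS, hmin⟩ := exists_kemeny_eq_minKemeny hn hd
    exact ⟨T, hT, congrFun hTd, hS, hmin⟩
  · obtain rfl : T.diag = d := funext hTd
    exact hT.kemeny_eq_minKemeny_iff_exists_isCycle (fun i => (hd i).2) hS
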